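/- Let r > 0 and a ∈ D_r^+ = {x = (x₁,x₂) : |x| < r, x₁ > 0}. Then for every complex-valued function u which is smooth on an open neighborhood of the closure of D_r^+, vanishes on a neighborhood of a, and vanishes at every point with x₁ = 0, the Poincaré-type inequality (1/r²) ∫_{D_r^+} |u|² dx ≤ (1/r) ∫_{S_r^+} |u|² ds + ∫_{D_r^+} |i∇u + A_a u|² dx holds, where S_r^+ = {x : |x| = r, x₁ ≥ 0} is the half-circle of radius r and ds denotes arclength measure. -/

import Mathlib

/-!
Write `D = i∇u + A u` for a real vector potential `A`. Since `A` is real, `⟪i u, x·D⟫` equals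
`⟪u, x·∇u⟫` whatever `A` is, so expanding `0 ≤ |i u + x·D|²` and using `|x·D| ≤ |x| |D|` gives the
pointwise bound `|u|² ≤ (2|u|² + 2⟪u, x·∇u⟫) + |x|² |D|²`. The bracket is the divergence of the
field `|u|² x`. On a circular sector with vertex at the origin this field is tangent to the two
straight sides, so its divergence integrates to the flux `r ∫ |u|² ds` through the arc.
-/

open MeasureTheory Set Filter Topology Real

section PolarSector

variable {F : Type*} [NormedAddCommGroup F] [NormedSpace ℝ F] {r α β : ℝ}

lemma integrableOn_image_polarCoord_symm_iff {S : Set (ℝ × ℝ)} (hS : MeasurableSet S)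
    (hST : S ⊆ polarCoord.target) (f : ℝ × ℝ → F) :
    IntegrableOn f (polarCoord.symm '' S) ↔
      IntegrableOn (fun p ↦ p.1 • f (polarCoord.symm p)) S := by
  rw [integrableOn_image_iff_integrableOn_abs_det_fderiv_smul volume hS
    (fun p _ ↦ (hasFDerivAt_polarCoord_symm p).hasFDerivWithinAt)
    (polarCoord.symm.injOn.mono hST)]
  refine integrableOn_congr_fun (fun p hp ↦ ?_) hS
  simp only [det_fderivPolarCoordSymm, abs_of_pos (mem_Ioi.1 (hST hp).1)]

lemma setIntegral_image_polarCoord_symm {S : Set (ℝ × ℝ)} (hS : MeasurableSet S)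
    (hST : S ⊆ polarCoord.target) (f : ℝ × ℝ → F) :
    ∫ x in polarCoord.symm '' S, f x = ∫ p in S, p.1 • f (polarCoord.symm p) := by
  rw [integral_image_eq_integral_abs_det_fderiv_smul volume hS
    (fun p _ ↦ (hasFDerivAt_polarCoord_symm p).hasFDerivWithinAt)
    (polarCoord.symm.injOn.mono hST)]
  refine setIntegral_congr_fun hS fun p hp ↦ ?_
  simp only [det_fderivPolarCoordSymm, abs_of_pos (mem_Ioi.1 (hST hp).1)]

/-- The open circular sector of radius `r` with vertex at the origin, bounded by the rays of polar
angles `α` and `β`. It is meant for `-π ≤ α ≤ β ≤ π`, where polar coordinates are injective. -/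
def polarSector (r α β : ℝ) : Set (ℝ × ℝ) :=
  polarCoord.symm '' (Ioo 0 r ×ˢ Ioo α β)

lemma Ioo_prod_Ioo_subset_polarCoord_target (hα : -π ≤ α) (hβ : β ≤ π) :
    Ioo 0 r ×ˢ Ioo α β ⊆ polarCoord.target :=
  prod_mono Ioo_subset_Ioi_self (Ioo_subset_Ioo hα hβ)

lemma isOpen_polarSector (hα : -π ≤ α) (hβ : β ≤ π) : IsOpen (polarSector r α β) :=
  polarCoord.symm.isOpen_image_of_subset_source (isOpen_Ioo.prod isOpen_Ioo)
    (Ioo_prod_Ioo_subset_polarCoord_target hα hβ)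

lemma closure_polarSector (hr : 0 < r) (hαβ : α < β) :
    closure (polarSector r α β) = polarCoord.symm '' (Icc 0 r ×ˢ Icc α β) := by
  have hclosure : closure (Ioo 0 r ×ˢ Ioo α β) = Icc 0 r ×ˢ Icc α β := by
    rw [closure_prod_eq, closure_Ioo hr.ne, closure_Ioo hαβ.ne]
  rw [polarSector, ← image_closure_of_isCompact _ continuous_polarCoord_symm.continuousOn, hclosure]
  exact hclosure ▸ isCompact_Icc.prod isCompact_Icc

lemma isCompact_closure_polarSector (hr : 0 < r) (hαβ : α < β) :
    IsCompact (closure (polarSector r α β)) := by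
  rw [closure_polarSector hr hαβ]
  exact (isCompact_Icc.prod isCompact_Icc).image continuous_polarCoord_symm

lemma integrableOn_polarSector_of_continuousOn_closure (hr : 0 < r) (hαβ : α < β)
    {E : Type*} [NormedAddCommGroup E] {f : ℝ × ℝ → E}
    (hf : ContinuousOn f (closure (polarSector r α β))) :
    IntegrableOn f (polarSector r α β) :=
  (hf.integrableOn_compact (isCompact_closure_polarSector hr hαβ)).mono_set subset_closure

lemma sq_add_sq_lt_of_mem_polarSector {x : ℝ × ℝ} (hx : x ∈ polarSector r α β) :
    x.1 ^ 2 + x.2 ^ 2 < r ^ 2 := by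
  obtain ⟨⟨ρ, t⟩, ⟨hρ, -⟩, rfl⟩ := hx
  calc (ρ * cos t) ^ 2 + (ρ * sin t) ^ 2 = ρ ^ 2 := by
        linear_combination ρ ^ 2 * sin_sq_add_cos_sq t
    _ < r ^ 2 := pow_lt_pow_left₀ hρ.2 hρ.1.le two_ne_zero

lemma setIntegral_polarSector (hr : 0 ≤ r) (hα : -π ≤ α) (hαβ : α ≤ β) (hβ : β ≤ π)
    {f : ℝ × ℝ → F} (hf : IntegrableOn f (polarSector r α β)) :
    ∫ x in polarSector r α β, f x =
      ∫ t in α..β, ∫ ρ in (0 : ℝ)..r, ρ • f (ρ * cos t, ρ * sin t) := by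
  have hS : MeasurableSet (Ioo 0 r ×ˢ Ioo α β) := measurableSet_Ioo.prod measurableSet_Ioo
  have hST := Ioo_prod_Ioo_subset_polarCoord_target (r := r) hα hβ
  have hint := (integrableOn_image_polarCoord_symm_iff hS hST f).1 hf
  rw [IntegrableOn, Measure.volume_eq_prod, ← Measure.prod_restrict] at hint
  rw [polarSector, setIntegral_image_polarCoord_symm hS hST, Measure.volume_eq_prod,
    ← Measure.prod_restrict, integral_prod_symm _ hint]
  simp only [intervalIntegral.integral_of_le hr, intervalIntegral.integral_of_le hαβ,
    integral_Ioc_eq_integral_Ioo, polarCoord_symm_apply]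

lemma setOf_sqrt_lt_and_pos_eq_polarSector (r : ℝ) :
    {x : ℝ × ℝ | √(x.1 ^ 2 + x.2 ^ 2) < r ∧ 0 < x.1} = polarSector r (-(π / 2)) (π / 2) := by
  have hST := Ioo_prod_Ioo_subset_polarCoord_target (r := r) (α := -(π / 2)) (β := π / 2)
    (by linarith [pi_pos]) (by linarith [pi_pos])
  ext x
  constructor
  · rintro ⟨hxr, hx⟩
    have hsource : x ∈ polarCoord.source := Or.inl hx
    have harg : |(Complex.equivRealProd.symm x).arg| < π / 2 :=
      Complex.abs_arg_lt_pi_div_two_iff.2 (Or.inl hx)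
    exact ⟨polarCoord x, ⟨⟨(polarCoord.map_source hsource).1, hxr⟩, abs_lt.1 harg⟩,
      polarCoord.left_inv hsource⟩
  · rintro ⟨p, hp, rfl⟩
    have hradius : √((polarCoord.symm p).1 ^ 2 + (polarCoord.symm p).2 ^ 2) = p.1 :=
      congrArg Prod.fst (polarCoord.right_inv (hST hp))
    exact ⟨hradius.trans_lt hp.1.2, mul_pos hp.1.1 (cos_pos_of_mem_Ioo hp.2)⟩

end PolarSector

section RadialDivergence

variable {F : Type*} [NormedAddCommGroup F] [InnerProductSpace ℝ F] {u : ℝ × ℝ → F} {r α β : ℝ}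

/-- The divergence `2 ‖u x‖ ^ 2 + x · ∇(‖u‖ ^ 2)(x)` of the planar vector field
`x ↦ ‖u x‖ ^ 2 • x`. -/
noncomputable def radialDivergence (u : ℝ × ℝ → F) (x : ℝ × ℝ) : ℝ :=
  2 * ‖u x‖ ^ 2 + 2 * inner ℝ (u x) (fderiv ℝ u x x)

lemma continuousAt_radialDivergence {x : ℝ × ℝ} (hu : ContDiffAt ℝ 1 u x) :
    ContinuousAt (radialDivergence u) x :=
  ((hu.continuousAt.norm.pow 2).const_mul 2).add
    ((hu.continuousAt.inner
      ((hu.continuousAt_fderiv one_ne_zero).clm_apply continuousAt_id)).const_mul 2)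

lemma hasDerivAt_sq_mul_norm_sq_smul {v : ℝ × ℝ} {ρ : ℝ} (hu : DifferentiableAt ℝ u (ρ • v)) :
    HasDerivAt (fun s : ℝ ↦ s ^ 2 * ‖u (s • v)‖ ^ 2) (ρ * radialDivergence u (ρ • v)) ρ := by
  have hray : HasDerivAt (fun s : ℝ ↦ s • v) v ρ := by
    simpa using (hasDerivAt_id ρ).smul_const v
  have hu_ray : HasDerivAt (fun s : ℝ ↦ u (s • v)) (fderiv ℝ u (ρ • v) v) ρ :=
    hu.hasFDerivAt.comp_hasDerivAt ρ hray
  refine ((hasDerivAt_pow 2 ρ).mul hu_ray.norm_sq).congr_deriv ?_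
  rw [radialDivergence, map_smul, real_inner_smul_right]
  push_cast
  ring

lemma integral_mul_radialDivergence_smul {v : ℝ × ℝ}
    (hu : ∀ ρ ∈ uIcc 0 r, ContDiffAt ℝ 1 u (ρ • v)) :
    ∫ ρ in (0 : ℝ)..r, ρ * radialDivergence u (ρ • v) = r ^ 2 * ‖u (r • v)‖ ^ 2 := by
  have hcont : ContinuousOn (fun ρ : ℝ ↦ ρ * radialDivergence u (ρ • v)) (uIcc 0 r) :=
    fun ρ hρ ↦ (continuousAt_id.mul ((continuousAt_radialDivergence (hu ρ hρ)).comp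
      (f := fun s : ℝ ↦ s • v) (by fun_prop))).continuousWithinAt
  rw [intervalIntegral.integral_eq_sub_of_hasDerivAt
    (fun ρ hρ ↦ hasDerivAt_sq_mul_norm_sq_smul ((hu ρ hρ).differentiableAt one_ne_zero))
    hcont.intervalIntegrable]
  ring

lemma setIntegral_polarSector_radialDivergence (hr : 0 < r) (hα : -π ≤ α) (hαβ : α < β)
    (hβ : β ≤ π) (hu : ∀ x ∈ closure (polarSector r α β), ContDiffAt ℝ 1 u x) :
    ∫ x in polarSector r α β, radialDivergence u x =
      r * ∫ t in α..β, ‖u (r * cos t, r * sin t)‖ ^ 2 * r := by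
  have hint : IntegrableOn (radialDivergence u) (polarSector r α β) :=
    integrableOn_polarSector_of_continuousOn_closure hr hαβ fun x hx ↦
      (continuousAt_radialDivergence (hu x hx)).continuousWithinAt
  rw [setIntegral_polarSector hr.le hα hαβ.le hβ hint, ← intervalIntegral.integral_const_mul]
  refine intervalIntegral.integral_congr fun t ht ↦ ?_
  rw [uIcc_of_le hαβ.le] at ht
  have hray : ∀ ρ ∈ uIcc 0 r, ContDiffAt ℝ 1 u (ρ • (cos t, sin t)) := fun ρ hρ ↦ by
    rw [uIcc_of_le hr.le] at hρ
    exact hu _ (closure_polarSector hr hαβ ▸ ⟨(ρ, t), ⟨hρ, ht⟩, rfl⟩)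
  calc ∫ ρ in (0 : ℝ)..r, ρ • radialDivergence u (ρ * cos t, ρ * sin t)
      = r ^ 2 * ‖u (r * cos t, r * sin t)‖ ^ 2 := integral_mul_radialDivergence_smul hray
    _ = r * (‖u (r * cos t, r * sin t)‖ ^ 2 * r) := by ring

end RadialDivergence

section MagneticEnergy

variable {A : ℝ × ℝ → ℝ × ℝ} {u : ℝ × ℝ → ℂ} {x : ℝ × ℝ} {r α β : ℝ}

/-- The energy density `|(i∇ + A) u|²` of a complex-valued function `u` in the plane with magnetic
vector potential `A`. -/
noncomputable def magneticEnergyDensity (A : ℝ × ℝ → ℝ × ℝ) (u : ℝ × ℝ → ℂ) (x : ℝ × ℝ) : ℝ :=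
  ‖Complex.I * fderiv ℝ u x (1, 0) + ((A x).1 : ℂ) * u x‖ ^ 2
    + ‖Complex.I * fderiv ℝ u x (0, 1) + ((A x).2 : ℂ) * u x‖ ^ 2

lemma norm_smul_add_smul_sq_le {E : Type*} [SeminormedAddCommGroup E] [NormedSpace ℝ E]
    (s t : ℝ) (p q : E) :
    ‖s • p + t • q‖ ^ 2 ≤ (s ^ 2 + t ^ 2) * (‖p‖ ^ 2 + ‖q‖ ^ 2) :=
  calc ‖s • p + t • q‖ ^ 2 ≤ (|s| * ‖p‖ + |t| * ‖q‖) ^ 2 := by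
        gcongr
        simpa only [norm_smul, Real.norm_eq_abs] using norm_add_le (s • p) (t • q)
    _ ≤ (|s| ^ 2 + |t| ^ 2) * (‖p‖ ^ 2 + ‖q‖ ^ 2) := by
        linear_combination sq_nonneg (|s| * ‖q‖ - |t| * ‖p‖)
    _ = (s ^ 2 + t ^ 2) * (‖p‖ ^ 2 + ‖q‖ ^ 2) := by simp only [sq_abs]

lemma inner_I_mul_I_mul_add_ofReal_mul (z w : ℂ) (c : ℝ) :
    inner ℝ (Complex.I * z) (Complex.I * w + c * z) = inner ℝ z w := by
  simp only [Complex.inner, Complex.mul_re, Complex.mul_im, Complex.add_re, Complex.add_im,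
    Complex.I_re, Complex.I_im, Complex.ofReal_re, Complex.ofReal_im, Complex.conj_re,
    Complex.conj_im]
  ring

lemma norm_sq_le_radialDivergence_add (A : ℝ × ℝ → ℝ × ℝ) (u : ℝ × ℝ → ℂ) (x : ℝ × ℝ) :
    ‖u x‖ ^ 2 ≤
      radialDivergence u x + (x.1 ^ 2 + x.2 ^ 2) * magneticEnergyDensity A u x := by
  set P := Complex.I * fderiv ℝ u x (1, 0) + ((A x).1 : ℂ) * u x with hP
  set Q := Complex.I * fderiv ℝ u x (0, 1) + ((A x).2 : ℂ) * u x with hQ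
  have hfderiv : fderiv ℝ u x x = x.1 * fderiv ℝ u x (1, 0) + x.2 * fderiv ℝ u x (0, 1) := by
    simp only [← Complex.real_smul, ← map_smul, ← map_add]
    simp
  have hradial : x.1 • P + x.2 • Q = Complex.I * fderiv ℝ u x x
      + ((x.1 * (A x).1 + x.2 * (A x).2 : ℝ) : ℂ) * u x := by
    rw [hfderiv, hP, hQ, Complex.real_smul, Complex.real_smul]
    push_cast
    ring
  have hinner : inner ℝ (Complex.I * u x) (x.1 • P + x.2 • Q) = inner ℝ (u x) (fderiv ℝ u x x) := by
    rw [hradial, inner_I_mul_I_mul_add_ofReal_mul]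
  have hsquare : 0 ≤ ‖u x‖ ^ 2 + 2 * inner ℝ (u x) (fderiv ℝ u x x) + ‖x.1 • P + x.2 • Q‖ ^ 2 := by
    have hexpand := norm_add_sq_real (Complex.I * u x) (x.1 • P + x.2 • Q)
    rw [hinner, norm_mul, Complex.norm_I, one_mul] at hexpand
    exact hexpand ▸ sq_nonneg _
  rw [radialDivergence, magneticEnergyDensity]
  linarith [norm_smul_add_smul_sq_le x.1 x.2 P Q]

lemma continuousAt_magneticEnergyDensity (hA : ContinuousAt A x) (hu : ContDiffAt ℝ 1 u x) :
    ContinuousAt (magneticEnergyDensity A u) x := by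
  have hcomponent (v : ℝ × ℝ) {c : ℝ × ℝ → ℝ} (hc : ContinuousAt c x) :
      ContinuousAt (fun y ↦ ‖Complex.I * fderiv ℝ u y v + (c y : ℂ) * u y‖ ^ 2) x :=
    ((continuousAt_const.mul ((hu.continuousAt_fderiv one_ne_zero).clm_apply
      continuousAt_const)).add
      ((Complex.continuous_ofReal.continuousAt.comp hc).mul hu.continuousAt)).norm.pow 2
  exact (hcomponent (1, 0) hA.fst).add (hcomponent (0, 1) hA.snd)

lemma continuousAt_magneticEnergyDensity_of_eventuallyEq_zero (hu : u =ᶠ[𝓝 x] 0) :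
    ContinuousAt (magneticEnergyDensity A u) x := by
  refine (continuousAt_const (y := (0 : ℝ))).congr ?_
  filter_upwards [hu, hu.fderiv (𝕜 := ℝ)] with y hy hy'
  simp [magneticEnergyDensity, hy, hy']

theorem poincare_halfdisk_general (hr : 0 < r) (hα : -π ≤ α) (hαβ : α < β) (hβ : β ≤ π)
    (hu : ∀ x ∈ closure (polarSector r α β), ContDiffAt ℝ 1 u x)
    (hE : IntegrableOn (magneticEnergyDensity A u) (polarSector r α β)) :
    (1 / r ^ 2) * ∫ x in polarSector r α β, ‖u x‖ ^ 2 ≤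
      (1 / r) * (∫ t in α..β, ‖u (r * cos t, r * sin t)‖ ^ 2 * r)
        + ∫ x in polarSector r α β, magneticEnergyDensity A u x := by
  have hnorm : IntegrableOn (fun x ↦ ‖u x‖ ^ 2) (polarSector r α β) :=
    integrableOn_polarSector_of_continuousOn_closure hr hαβ fun x hx ↦
      ((hu x hx).continuousAt.norm.pow 2).continuousWithinAt
  have hdiv : IntegrableOn (radialDivergence u) (polarSector r α β) :=
    integrableOn_polarSector_of_continuousOn_closure hr hαβ fun x hx ↦
      (continuousAt_radialDivergence (hu x hx)).continuousWithinAt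
  have hpointwise : ∀ x ∈ polarSector r α β,
      ‖u x‖ ^ 2 ≤ radialDivergence u x + r ^ 2 * magneticEnergyDensity A u x := fun x hx ↦ by
    have hE_nonneg : 0 ≤ magneticEnergyDensity A u x := by unfold magneticEnergyDensity; positivity
    exact (norm_sq_le_radialDivergence_add A u x).trans (by
      gcongr; exact (sq_add_sq_lt_of_mem_polarSector hx).le)
  calc (1 / r ^ 2) * ∫ x in polarSector r α β, ‖u x‖ ^ 2
      ≤ (1 / r ^ 2) * ∫ x in polarSector r α β,
          (radialDivergence u x + r ^ 2 * magneticEnergyDensity A u x) := by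
        refine mul_le_mul_of_nonneg_left ?_ (by positivity)
        exact setIntegral_mono_on hnorm (hdiv.add (hE.const_mul _))
          (isOpen_polarSector hα hβ).measurableSet hpointwise
    _ = (1 / r ^ 2) * (r * (∫ t in α..β, ‖u (r * cos t, r * sin t)‖ ^ 2 * r)
          + r ^ 2 * ∫ x in polarSector r α β, magneticEnergyDensity A u x) := by
        rw [integral_add hdiv (hE.const_mul _), integral_const_mul,
          setIntegral_polarSector_radialDivergence hr hα hαβ hβ hu]
    _ = _ := by field_simp

end MagneticEnergy

section AharonovBohm

variable {a : ℝ × ℝ} {u : ℝ × ℝ → ℂ} {r α β : ℝ}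

/-- The Aharonov–Bohm vector potential with pole `a` and circulation `1 / 2`. At the pole itself
division by zero gives it the value `0`. -/
noncomputable def aharonovBohmPotential (a x : ℝ × ℝ) : ℝ × ℝ :=
  (-(x.2 - a.2) / (2 * ((x.1 - a.1) ^ 2 + (x.2 - a.2) ^ 2)),
    (x.1 - a.1) / (2 * ((x.1 - a.1) ^ 2 + (x.2 - a.2) ^ 2)))

lemma continuousAt_aharonovBohmPotential {x : ℝ × ℝ} (hx : x ≠ a) :
    ContinuousAt (aharonovBohmPotential a) x := by
  have hne : 2 * ((x.1 - a.1) ^ 2 + (x.2 - a.2) ^ 2) ≠ 0 := fun h ↦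
    hx (Prod.ext (by nlinarith [sq_nonneg (x.2 - a.2)]) (by nlinarith [sq_nonneg (x.1 - a.1)]))
  unfold aharonovBohmPotential
  fun_prop (disch := assumption)

lemma continuousAt_magneticEnergyDensity_aharonovBohmPotential {x : ℝ × ℝ}
    (hu : ContDiffAt ℝ 1 u x) (hua : u =ᶠ[𝓝 a] 0) :
    ContinuousAt (magneticEnergyDensity (aharonovBohmPotential a) u) x := by
  rcases eq_or_ne x a with rfl | hx
  · exact continuousAt_magneticEnergyDensity_of_eventuallyEq_zero hua
  · exact continuousAt_magneticEnergyDensity (continuousAt_aharonovBohmPotential hx) hu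

lemma integrableOn_magneticEnergyDensity_aharonovBohmPotential (hr : 0 < r) (hαβ : α < β)
    (hu : ∀ x ∈ closure (polarSector r α β), ContDiffAt ℝ 1 u x) (hua : u =ᶠ[𝓝 a] 0) :
    IntegrableOn (magneticEnergyDensity (aharonovBohmPotential a) u) (polarSector r α β) :=
  integrableOn_polarSector_of_continuousOn_closure hr hαβ fun x hx ↦
    (continuousAt_magneticEnergyDensity_aharonovBohmPotential (hu x hx) hua).continuousWithinAt

end AharonovBohm

lemma eventually_sqrt_sq_add_sq_lt (a : ℝ × ℝ) {ε : ℝ} (hε : 0 < ε) :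
    ∀ᶠ x in 𝓝 a, √((x.1 - a.1) ^ 2 + (x.2 - a.2) ^ 2) < ε :=
  ContinuousAt.eventually_lt (by fun_prop) continuousAt_const (by simpa using hε)

/-- Poincaré-type inequality on the half-disk `D_r^+` for the Aharonov–Bohm operator:
`(1/r²)∫_{D_r^+}|u|² ≤ (1/r)∫_{S_r^+}|u|² ds + ∫_{D_r^+}|(i∇+A_a)u|²`, for `u` smooth near
the closure of `D_r^+`, vanishing near the pole `a ∈ D_r^+` and on `{x₁ = 0}`. -/
theorem poincare_halfdisk (r : ℝ) (hr : 0 < r) (a : ℝ × ℝ)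
    (ha : Real.sqrt (a.1 ^ 2 + a.2 ^ 2) < r ∧ 0 < a.1)
    (U : Set (ℝ × ℝ)) (hU : IsOpen U)
    (hUD : closure {x : ℝ × ℝ | Real.sqrt (x.1 ^ 2 + x.2 ^ 2) < r ∧ 0 < x.1} ⊆ U)
    (u : ℝ × ℝ → ℂ) (hu : ContDiffOn ℝ (⊤ : ℕ∞) u U)
    (hvan : ∃ ε : ℝ, 0 < ε ∧ ∀ x : ℝ × ℝ,
      Real.sqrt ((x.1 - a.1) ^ 2 + (x.2 - a.2) ^ 2) < ε → u x = 0)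
    (hbdry : ∀ x₂ : ℝ, u (0, x₂) = 0) :
    (1 / r ^ 2) * (∫ x in {x : ℝ × ℝ | Real.sqrt (x.1 ^ 2 + x.2 ^ 2) < r ∧ 0 < x.1}, ‖u x‖ ^ 2)
      ≤ (1 / r) * (∫ t in (-(Real.pi / 2))..(Real.pi / 2),
            ‖u (r * Real.cos t, r * Real.sin t)‖ ^ 2 * r)
        + ∫ x in {x : ℝ × ℝ | Real.sqrt (x.1 ^ 2 + x.2 ^ 2) < r ∧ 0 < x.1},
            (‖Complex.I * fderiv ℝ u x (1, 0)
                + ((-(x.2 - a.2) / (2 * ((x.1 - a.1) ^ 2 + (x.2 - a.2) ^ 2)) : ℝ) : ℂ) * u x‖ ^ 2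
              + ‖Complex.I * fderiv ℝ u x (0, 1)
                + (((x.1 - a.1) / (2 * ((x.1 - a.1) ^ 2 + (x.2 - a.2) ^ 2)) : ℝ) : ℂ) * u x‖ ^ 2) := by
  obtain ⟨ε, hε, hzero⟩ := hvan
  rw [setOf_sqrt_lt_and_pos_eq_polarSector] at hUD ⊢
  have hangle : -(π / 2) < π / 2 := by linarith [pi_pos]
  have hu₁ : ∀ x ∈ closure (polarSector r (-(π / 2)) (π / 2)), ContDiffAt ℝ 1 u x := fun x hx ↦
    (hu.contDiffAt (hU.mem_nhds (hUD hx))).of_le (by exact_mod_cast le_top)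
  have hua : u =ᶠ[𝓝 a] 0 := (eventually_sqrt_sq_add_sq_lt a hε).mono hzero
  simpa only [magneticEnergyDensity, aharonovBohmPotential] using
    poincare_halfdisk_general hr (by linarith [pi_pos]) hangle (by linarith [pi_pos]) hu₁
      (integrableOn_magneticEnergyDensity_aharonovBohmPotential hr hangle hu₁ hua)
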